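/- arXiv:2407.10602 — 2 statements merged into one kernel-verified Lean document; each statement's English description precedes it below -/
import Mathlib

section
/- Define g : (−π/4, π/4) → ℝ by g(ψ) = sin(2ψ) · ln(tan(ψ + π/4)). Then: (i) g is even, i.e. g(−ψ) = g(ψ) for all ψ ∈ (−π/4, π/4); (ii) g(0) = 0 and g is strictly increasing on [0, π/4); (iii) g(ψ) → +∞ as ψ → π/4⁻. Consequently there exists a unique ψ₀ ∈ (0, π/4) such that sin(2ψ₀) · ln(tan(ψ₀ + π/4)) = 1. -/
open Real Filter Topology

/-!
Both `sin (2ψ)` and `ln (tan (ψ + π/4))` are odd, the latter because `ψ ↦ -ψ` turns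
`tan (ψ + π/4)` into its reciprocal, so the product is even. On `[0, π/4)` both factors are
nonnegative and strictly increasing, hence so is the product; as `ψ → π/4⁻` the first tends to `1`
and the second to `+∞`. The intermediate value theorem then yields the root.
-/

section OrderLemmas

variable {α β : Type*}

lemma strictMonoOn_mul_of_nonneg [Preorder α] [MulZeroClass β] [Preorder β] [PosMulStrictMono β]
    [MulPosMono β] {f g : α → β} {s : Set α} (hf : StrictMonoOn f s) (hg : StrictMonoOn g s)
    (hf₀ : ∀ x ∈ s, 0 ≤ f x) (hg₀ : ∀ x ∈ s, 0 ≤ g x) :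
    StrictMonoOn (fun x ↦ f x * g x) s :=
  fun x hx _ hy hxy ↦ mul_lt_mul'' (hf hx hy hxy) (hg hx hy hxy) (hf₀ x hx) (hg₀ x hx)

lemma existsUnique_mem_Ioo_eq_of_strictMonoOn_of_tendsto_atTop
    [ConditionallyCompleteLinearOrder α] [TopologicalSpace α] [OrderTopology α] [DenselyOrdered α]
    [LinearOrder β] [TopologicalSpace β] [OrderClosedTopology β]
    {f : α → β} {a b : α} {c : β} (hab : a < b) (hmono : StrictMonoOn f (Set.Ico a b))
    (hcont : ContinuousOn f (Set.Ico a b)) (hlim : Tendsto f (𝓝[<] b) atTop) (hc : f a < c) :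
    ∃! x, x ∈ Set.Ioo a b ∧ f x = c := by
  have : (𝓝[<] b).NeBot := nhdsLT_neBot_of_exists_lt ⟨a, hab⟩
  obtain ⟨x, hx, rfl⟩ : c ∈ f '' Set.Ico a b :=
    isPreconnected_Ico.intermediate_value_Ici (Set.left_mem_Ico.2 hab)
      (le_principal_iff.2 (Ico_mem_nhdsLT hab)) hcont hlim hc.le
  have hax : a < x := (hmono.lt_iff_lt (Set.left_mem_Ico.2 hab) hx).1 hc
  exact ⟨x, ⟨⟨hax, hx.2⟩, rfl⟩,
    fun y hy ↦ hmono.injOn (Set.Ioo_subset_Ico_self hy.1) hx hy.2⟩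

end OrderLemmas

lemma strictMonoOn_sin_two_mul :
    StrictMonoOn (fun ψ ↦ sin (2 * ψ)) (Set.Icc (-(π / 4)) (π / 4)) :=
  strictMonoOn_sin.comp (fun _ _ _ _ h ↦ by linarith)
    fun ψ hψ ↦ ⟨by linarith [hψ.1], by linarith [hψ.2]⟩

/-- The function `ψ ↦ ln (tan (ψ + π/4))`, that is, the inverse Gudermannian function at `2ψ`.
Outside `(-π/4, π/4)` its values depend on the conventions for `Real.log` and `Real.tan`. -/
noncomputable def logTan (ψ : ℝ) : ℝ := log (tan (ψ + π / 4))

lemma logTan_zero : logTan 0 = 0 := by simp [logTan]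

lemma logTan_odd : Function.Odd logTan := fun ψ ↦ by
  have hreflect : -ψ + π / 4 = π / 2 - (ψ + π / 4) := by ring
  rw [logTan, hreflect, tan_pi_div_two_sub, log_inv, logTan]

lemma tan_add_pi_div_four_pos {ψ : ℝ} (hψ : ψ ∈ Set.Ioo (-(π / 4)) (π / 4)) :
    0 < tan (ψ + π / 4) :=
  tan_pos_of_pos_of_lt_pi_div_two (by linarith [hψ.1]) (by linarith [hψ.2])

lemma strictMonoOn_logTan : StrictMonoOn logTan (Set.Ioo (-(π / 4)) (π / 4)) :=
  fun x hx y hy hxy ↦ log_lt_log (tan_add_pi_div_four_pos hx) <|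
    tan_lt_tan_of_lt_of_lt_pi_div_two (by linarith [hx.1, pi_pos]) (by linarith [hy.2])
      (by linarith)

lemma continuousOn_logTan : ContinuousOn logTan (Set.Ioo (-(π / 4)) (π / 4)) :=
  (continuousOn_tan_Ioo.comp (by fun_prop)
    fun ψ hψ ↦ ⟨by linarith [hψ.1, pi_pos], by linarith [hψ.2]⟩).log
    fun _ hψ ↦ (tan_add_pi_div_four_pos hψ).ne'

lemma tendsto_logTan_atTop : Tendsto logTan (𝓝[<] (π / 4)) atTop := by
  have hshift : Tendsto (· + π / 4) (𝓝[<] (π / 4)) (𝓝[<] (π / 4 + π / 4)) :=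
    (continuous_add_const (π / 4)).continuousWithinAt.tendsto_nhdsWithin
      fun _ hψ ↦ Set.mem_Iio.2 (add_lt_add_left (Set.mem_Iio.1 hψ) _)
  rw [show π / 4 + π / 4 = π / 2 by ring] at hshift
  exact tendsto_log_atTop.comp (tendsto_tan_pi_div_two.comp hshift)

/-- The function `g(ψ) = sin(2ψ) ln(tan(ψ + π/4))`, whose level set `g = 1` locates the critical
points of the mean curvature `H₀(ψ) = 4 cos(2ψ) ln(tan(ψ + π/4))`. -/
noncomputable def sinMulLogTan (ψ : ℝ) : ℝ := sin (2 * ψ) * logTan ψ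

lemma sinMulLogTan_zero : sinMulLogTan 0 = 0 := by simp [sinMulLogTan]

lemma sinMulLogTan_even : Function.Even sinMulLogTan := fun ψ ↦ by
  rw [sinMulLogTan, logTan_odd, mul_neg 2, sin_neg, neg_mul_neg, sinMulLogTan]

lemma strictMonoOn_sinMulLogTan : StrictMonoOn sinMulLogTan (Set.Ico 0 (π / 4)) := by
  have hπ : -(π / 4) < 0 := by linarith [pi_pos]
  have hlog := strictMonoOn_logTan.mono (Set.Ico_subset_Ioo_left hπ)
  have hsin := strictMonoOn_sin_two_mul.mono
    (Set.Ico_subset_Icc_self.trans (Set.Icc_subset_Icc_left hπ.le))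
  have h0 : (0 : ℝ) ∈ Set.Ico 0 (π / 4) := ⟨le_rfl, by linarith⟩
  refine strictMonoOn_mul_of_nonneg hsin hlog (fun ψ hψ ↦ ?_) fun ψ hψ ↦ ?_
  · simpa using hsin.monotoneOn h0 hψ hψ.1
  · simpa only [logTan_zero] using hlog.monotoneOn h0 hψ hψ.1

lemma continuousOn_sinMulLogTan : ContinuousOn sinMulLogTan (Set.Ioo (-(π / 4)) (π / 4)) :=
  ContinuousOn.mul (by fun_prop) continuousOn_logTan

lemma tendsto_sinMulLogTan_atTop : Tendsto sinMulLogTan (𝓝[<] (π / 4)) atTop := by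
  have hsin : Tendsto (fun ψ ↦ sin (2 * ψ)) (𝓝[<] (π / 4)) (𝓝 1) := by
    refine (Continuous.tendsto' (by fun_prop) _ _ ?_).mono_left nhdsWithin_le_nhds
    rw [show 2 * (π / 4) = π / 2 by ring, sin_pi_div_two]
  exact hsin.pos_mul_atTop one_pos tendsto_logTan_atTop

/-- The function `g(ψ) = sin(2ψ) ln(tan(ψ + π/4))` on `(−π/4, π/4)`:
(i) `g` is even; (ii) `g(0) = 0` and `g` is strictly increasing on `[0, π/4)`;
(iii) `g(ψ) → +∞` as `ψ → π/4⁻`. Consequently there is a unique `ψ₀ ∈ (0, π/4)` with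
`sin(2ψ₀) ln(tan(ψ₀ + π/4)) = 1`. -/
theorem g_even_mono_unique_root (g : ℝ → ℝ)
    (hg : ∀ ψ, g ψ = Real.sin (2 * ψ) * Real.log (Real.tan (ψ + π / 4))) :
    (∀ ψ ∈ Set.Ioo (-(π / 4)) (π / 4), g (-ψ) = g ψ) ∧
    g 0 = 0 ∧
    StrictMonoOn g (Set.Ico 0 (π / 4)) ∧
    Tendsto g (𝓝[<] (π / 4)) atTop ∧
    (∃! ψ₀ : ℝ, ψ₀ ∈ Set.Ioo 0 (π / 4) ∧ g ψ₀ = 1) := by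
  obtain rfl : g = sinMulLogTan := funext hg
  have hπ : 0 < π / 4 := by positivity
  have hcont : ContinuousOn sinMulLogTan (Set.Ico 0 (π / 4)) :=
    continuousOn_sinMulLogTan.mono (Set.Ico_subset_Ioo_left (neg_lt_zero.2 hπ))
  exact ⟨fun ψ _ ↦ sinMulLogTan_even ψ, sinMulLogTan_zero, strictMonoOn_sinMulLogTan,
    tendsto_sinMulLogTan_atTop,
    existsUnique_mem_Ioo_eq_of_strictMonoOn_of_tendsto_atTop hπ strictMonoOn_sinMulLogTan hcont
      tendsto_sinMulLogTan_atTop (sinMulLogTan_zero.trans_lt one_pos)⟩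
end

section
/- Define H₀ : (−π/4, π/4) → ℝ by H₀(ψ) = 4 cos(2ψ) · ln(tan(ψ + π/4)), and let ψ₀ ∈ (0, π/4) be the unique solution of sin(2ψ₀) · ln(tan(ψ₀ + π/4)) = 1. Then H₀′(ψ) > 0 for all ψ ∈ (−ψ₀, ψ₀), H₀′(±ψ₀) = 0, and H₀′(ψ) < 0 for all ψ ∈ (−π/4, −ψ₀) ∪ (ψ₀, π/4). In particular, H₀ is strictly monotone on each of the three intervals, its only critical points in (−π/4, π/4) are ±ψ₀, and these critical points are non-degenerate extrema (a strict local maximum of H₀ at ψ₀ and a strict local minimum at −ψ₀). -/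
open Real

/-!
Write `G x = log (tan (x / 2 + π / 4))`, so that `G' = 1 / cos` and `H₀ ψ = 4 cos (2ψ) G (2ψ)`.
Then `H₀' ψ = 8 (1 - sin (2ψ) G (2ψ))` and `H₀'' ψ = -16 (cos (2ψ) G (2ψ) + tan (2ψ))`, which is
negative on `(0, π/4)`. Thus `H₀` is odd, and its even derivative is strictly decreasing in `|ψ|`
and vanishes at `|ψ| = ψ₀`; everything else follows from these two facts.
-/

section OddEven

open Set

lemma even_deriv_of_odd {𝕜 F : Type*} [NontriviallyNormedField 𝕜] [NormedAddCommGroup F]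
    [NormedSpace 𝕜 F] {f : 𝕜 → F} (hf : f.Odd) : (deriv f).Even := fun x => by
  rw [← neg_inj, ← deriv_comp_neg, funext hf, deriv.fun_neg]

lemma odd_deriv_of_even {𝕜 F : Type*} [NontriviallyNormedField 𝕜] [NormedAddCommGroup F]
    [NormedSpace 𝕜 F] {f : 𝕜 → F} (hf : f.Even) : (deriv f).Odd := fun x => by
  rw [← neg_inj, ← deriv_comp_neg, funext hf, neg_neg]

variable {α β : Type*} [AddCommGroup α] [LinearOrder α]

lemma apply_abs_of_even {f : α → β} (hf : f.Even) (x : α) : f |x| = f x := by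
  rcases abs_choice x with h | h <;> rw [h]
  exact hf x

variable [IsOrderedAddMonoid α]

lemma lt_iff_abs_lt_of_even_of_strictAntiOn [Preorder β] {f : α → β} {a x y : α} (hf : f.Even)
    (hanti : StrictAntiOn f (Ico 0 a)) (hx : |x| < a) (hy : |y| < a) :
    f x < f y ↔ |y| < |x| := by
  rw [← apply_abs_of_even hf x, ← apply_abs_of_even hf y]
  exact hanti.lt_iff_gt ⟨abs_nonneg x, hx⟩ ⟨abs_nonneg y, hy⟩

lemma strictAntiOn_Ioc_neg_of_odd [AddCommGroup β] [PartialOrder β] [IsOrderedAddMonoid β]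
    {f : α → β} {a c : α} (hf : f.Odd) (hanti : StrictAntiOn f (Ico c a)) :
    StrictAntiOn f (Ioc (-a) (-c)) := fun x hx y hy hxy => by
  have hneg : f (-x) < f (-y) :=
    hanti ⟨le_neg_of_le_neg hy.2, neg_lt.1 hy.1⟩ ⟨le_neg_of_le_neg hx.2, neg_lt.1 hx.1⟩
      (neg_lt_neg hxy)
  rwa [hf x, hf y, neg_lt_neg_iff] at hneg

end OddEven

section OddWithStrictAntiDeriv

open Set

variable {f : ℝ → ℝ} {a c x : ℝ}

lemma deriv_pos_iff_abs_lt_of_odd (hf : f.Odd) (hanti : StrictAntiOn (deriv f) (Ico 0 a))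
    (hc : c ∈ Ioo 0 a) (hcrit : deriv f c = 0) (hx : |x| < a) : 0 < deriv f x ↔ |x| < c := by
  have hc_abs : |c| = c := abs_of_pos hc.1
  rw [← hcrit, lt_iff_abs_lt_of_even_of_strictAntiOn (even_deriv_of_odd hf) hanti
    (hc_abs.trans_lt hc.2) hx, hc_abs]

lemma deriv_neg_iff_lt_abs_of_odd (hf : f.Odd) (hanti : StrictAntiOn (deriv f) (Ico 0 a))
    (hc : c ∈ Ioo 0 a) (hcrit : deriv f c = 0) (hx : |x| < a) : deriv f x < 0 ↔ c < |x| := by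
  have hc_abs : |c| = c := abs_of_pos hc.1
  rw [← hcrit, lt_iff_abs_lt_of_even_of_strictAntiOn (even_deriv_of_odd hf) hanti hx
    (hc_abs.trans_lt hc.2), hc_abs]

lemma strictMonoOn_Icc_of_odd_of_strictAntiOn_deriv (hf : f.Odd)
    (hcont : ContinuousOn f (Ioo (-a) a)) (hanti : StrictAntiOn (deriv f) (Ico 0 a))
    (hc : c ∈ Ioo 0 a) (hcrit : deriv f c = 0) : StrictMonoOn f (Icc (-c) c) := by
  refine strictMonoOn_of_deriv_pos (convex_Icc _ _)
    (hcont.mono (Icc_subset_Ioo (neg_lt_neg hc.2) hc.2)) fun x hx => ?_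
  rw [interior_Icc, mem_Ioo, ← abs_lt] at hx
  exact (deriv_pos_iff_abs_lt_of_odd hf hanti hc hcrit (hx.trans hc.2)).2 hx

lemma strictAntiOn_Ico_of_odd_of_strictAntiOn_deriv (hf : f.Odd)
    (hcont : ContinuousOn f (Ioo (-a) a)) (hanti : StrictAntiOn (deriv f) (Ico 0 a))
    (hc : c ∈ Ioo 0 a) (hcrit : deriv f c = 0) : StrictAntiOn f (Ico c a) := by
  have hneg_lt : -a < c := (neg_neg_of_pos (hc.1.trans hc.2)).trans hc.1
  refine strictAntiOn_of_deriv_neg (convex_Ico _ _)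
    (hcont.mono fun x hx => ⟨hneg_lt.trans_le hx.1, hx.2⟩) fun x hx => ?_
  rw [interior_Ico] at hx
  have hx_abs : |x| = x := abs_of_pos (hc.1.trans hx.1)
  exact (deriv_neg_iff_lt_abs_of_odd hf hanti hc hcrit (hx_abs.trans_lt hx.2)).2
    (hx.1.trans_eq hx_abs.symm)

end OddWithStrictAntiDeriv

section InvGudermannian

/-- The inverse Gudermannian function on `(-π/2, π/2)`, the odd antiderivative of `1 / cos`.
Since `Real.log x = log |x|`, the formula extends it to an antiderivative of `1 / cos` wherever
`cos` does not vanish. -/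
noncomputable def invGudermannian (x : ℝ) : ℝ :=
  log (tan (x / 2 + π / 4))

lemma odd_invGudermannian : invGudermannian.Odd := fun x => by
  rw [invGudermannian, invGudermannian, ← log_inv, ← tan_pi_div_two_sub]
  congr 2
  ring

lemma invGudermannian_pos {x : ℝ} (hx : x ∈ Set.Ioo 0 (π / 2)) : 0 < invGudermannian x := by
  obtain ⟨hx_pos, hx_lt⟩ := hx
  refine log_pos ?_
  rw [← tan_pi_div_four]
  exact tan_lt_tan_of_lt_of_lt_pi_div_two (by linarith) (by linarith) (by linarith)

lemma cos_eq_two_mul_sin_mul_cos_shift (x : ℝ) :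
    cos x = 2 * sin (x / 2 + π / 4) * cos (x / 2 + π / 4) := by
  rw [← sin_two_mul, ← sin_add_pi_div_two]
  congr 1
  ring

lemma hasDerivAt_invGudermannian {x : ℝ} (hx : cos x ≠ 0) :
    HasDerivAt invGudermannian (cos x)⁻¹ x := by
  have hcos := cos_eq_two_mul_sin_mul_cos_shift x
  have hs : sin (x / 2 + π / 4) ≠ 0 := fun h => hx (by rw [hcos, h]; ring)
  have hc : cos (x / 2 + π / 4) ≠ 0 := fun h => hx (by rw [hcos, h]; ring)
  have htan : tan (x / 2 + π / 4) ≠ 0 := by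
    rw [tan_eq_sin_div_cos]
    exact div_ne_zero hs hc
  have hshift : HasDerivAt (fun y : ℝ => y / 2 + π / 4) (1 / 2) x :=
    ((hasDerivAt_id x).div_const 2).add_const _
  have htan_shift : HasDerivAt (fun y : ℝ => tan (y / 2 + π / 4))
      (1 / cos (x / 2 + π / 4) ^ 2 * (1 / 2)) x :=
    HasDerivAt.comp (h₂ := tan) x (hasDerivAt_tan hc) hshift
  refine (htan_shift.log htan).congr_deriv ?_
  rw [hcos, tan_eq_sin_div_cos]
  field_simp

lemma hasDerivAt_cos_mul_invGudermannian {x : ℝ} (hx : cos x ≠ 0) :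
    HasDerivAt (fun y => cos y * invGudermannian y) (1 - sin x * invGudermannian x) x := by
  refine ((hasDerivAt_cos x).mul (hasDerivAt_invGudermannian hx)).congr_deriv ?_
  rw [mul_inv_cancel₀ hx]
  ring

lemma hasDerivAt_sin_mul_invGudermannian {x : ℝ} (hx : cos x ≠ 0) :
    HasDerivAt (fun y => sin y * invGudermannian y) (cos x * invGudermannian x + tan x) x := by
  refine ((hasDerivAt_sin x).mul (hasDerivAt_invGudermannian hx)).congr_deriv ?_
  rw [tan_eq_sin_div_cos, div_eq_mul_inv]

end InvGudermannian

section MeanCurvatureCoeff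

open Set

/-- The first-order coefficient `H₀` of the mean curvature along the family `f_ψ^g`, written in
terms of the inverse Gudermannian function at the double angle. -/
noncomputable def meanCurvatureCoeff (ψ : ℝ) : ℝ :=
  4 * cos (2 * ψ) * invGudermannian (2 * ψ)

lemma meanCurvatureCoeff_eq (ψ : ℝ) :
    meanCurvatureCoeff ψ = 4 * cos (2 * ψ) * log (tan (ψ + π / 4)) := by
  rw [meanCurvatureCoeff, invGudermannian, mul_div_cancel_left₀ ψ two_ne_zero]

lemma odd_meanCurvatureCoeff : meanCurvatureCoeff.Odd := fun ψ => by
  rw [meanCurvatureCoeff, meanCurvatureCoeff, mul_neg, cos_neg, odd_invGudermannian, mul_neg]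

lemma cos_two_mul_pos {ψ : ℝ} (hψ : ψ ∈ Ioo (-(π / 4)) (π / 4)) : 0 < cos (2 * ψ) :=
  cos_pos_of_mem_Ioo ⟨by linarith [hψ.1], by linarith [hψ.2]⟩

variable {ψ : ℝ}

lemma hasDerivAt_meanCurvatureCoeff (hψ : cos (2 * ψ) ≠ 0) :
    HasDerivAt meanCurvatureCoeff (8 * (1 - sin (2 * ψ) * invGudermannian (2 * ψ))) ψ := by
  have hdouble : HasDerivAt (fun φ : ℝ => 2 * φ) (2 * 1) ψ := (hasDerivAt_id ψ).const_mul 2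
  have hcomp := ((hasDerivAt_cos_mul_invGudermannian hψ).comp ψ hdouble).const_mul 4
  refine (hcomp.congr_deriv (by ring)).congr_of_eventuallyEq (.of_forall fun φ => ?_)
  exact mul_assoc _ _ _

lemma hasDerivAt_deriv_meanCurvatureCoeff (hψ : cos (2 * ψ) ≠ 0) :
    HasDerivAt (deriv meanCurvatureCoeff)
      (-16 * (cos (2 * ψ) * invGudermannian (2 * ψ) + tan (2 * ψ))) ψ := by
  have hdouble : HasDerivAt (fun φ : ℝ => 2 * φ) (2 * 1) ψ := (hasDerivAt_id ψ).const_mul 2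
  have hcomp :=
    (((hasDerivAt_sin_mul_invGudermannian hψ).comp ψ hdouble).const_sub 1).const_mul 8
  have hcos_ne : ∀ᶠ φ in nhds ψ, cos (2 * φ) ≠ 0 :=
    ContinuousAt.eventually_ne (by fun_prop) hψ
  exact (hcomp.congr_deriv (by ring)).congr_of_eventuallyEq
    (hcos_ne.mono fun φ hφ => (hasDerivAt_meanCurvatureCoeff hφ).deriv)

lemma deriv_deriv_meanCurvatureCoeff_neg (hψ : ψ ∈ Ioo 0 (π / 4)) :
    deriv (deriv meanCurvatureCoeff) ψ < 0 := by
  have hdouble : 2 * ψ ∈ Ioo 0 (π / 2) := ⟨by linarith [hψ.1], by linarith [hψ.2]⟩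
  have hcos : 0 < cos (2 * ψ) := cos_two_mul_pos ⟨by linarith [hψ.1, pi_pos], hψ.2⟩
  have htan : 0 < tan (2 * ψ) := tan_pos_of_pos_of_lt_pi_div_two hdouble.1 hdouble.2
  have hinvGud : 0 < invGudermannian (2 * ψ) := invGudermannian_pos hdouble
  rw [(hasDerivAt_deriv_meanCurvatureCoeff hcos.ne').deriv]
  exact mul_neg_of_neg_of_pos (by norm_num) (by positivity)

lemma continuousOn_meanCurvatureCoeff :
    ContinuousOn meanCurvatureCoeff (Ioo (-(π / 4)) (π / 4)) := fun _ hψ =>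
  (hasDerivAt_meanCurvatureCoeff (cos_two_mul_pos hψ).ne').continuousAt.continuousWithinAt

lemma strictAntiOn_deriv_meanCurvatureCoeff :
    StrictAntiOn (deriv meanCurvatureCoeff) (Ico 0 (π / 4)) := by
  refine strictAntiOn_of_deriv_neg (convex_Ico _ _) (fun ψ hψ => ?_) fun ψ hψ => ?_
  · have hcos : 0 < cos (2 * ψ) := cos_two_mul_pos ⟨by linarith [hψ.1, pi_pos], hψ.2⟩
    exact (hasDerivAt_deriv_meanCurvatureCoeff hcos.ne').continuousAt.continuousWithinAt
  · rw [interior_Ico] at hψ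
    exact deriv_deriv_meanCurvatureCoeff_neg hψ

lemma deriv_meanCurvatureCoeff_eq_zero (hψ : cos (2 * ψ) ≠ 0)
    (hroot : sin (2 * ψ) * log (tan (ψ + π / 4)) = 1) : deriv meanCurvatureCoeff ψ = 0 := by
  rw [(hasDerivAt_meanCurvatureCoeff hψ).deriv, invGudermannian,
    mul_div_cancel_left₀ ψ two_ne_zero, hroot, sub_self, mul_zero]

end MeanCurvatureCoeff

/-- Monotonicity structure of `H₀(ψ) = 4 cos(2ψ) ln(tan(ψ + π/4))` on `(−π/4, π/4)`:
with `ψ₀ ∈ (0, π/4)` the unique solution of `sin(2ψ₀) ln(tan(ψ₀ + π/4)) = 1`, the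
derivative of `H₀` is positive on `(−ψ₀, ψ₀)`, vanishes at `±ψ₀`, and is negative on
`(−π/4, −ψ₀) ∪ (ψ₀, π/4)`; `H₀` is strictly monotone on each of the three intervals, and
`±ψ₀` are non-degenerate extrema: a strict local maximum at `ψ₀` and a strict local
minimum at `−ψ₀`. -/
theorem H0_monotonicity (H₀ : ℝ → ℝ)
    (hH₀ : ∀ ψ, H₀ ψ = 4 * Real.cos (2 * ψ) * Real.log (Real.tan (ψ + π / 4)))
    (ψ₀ : ℝ) (hψ₀ : ψ₀ ∈ Set.Ioo 0 (π / 4))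
    (hroot : Real.sin (2 * ψ₀) * Real.log (Real.tan (ψ₀ + π / 4)) = 1) :
    (∀ ψ ∈ Set.Ioo (-ψ₀) ψ₀, 0 < deriv H₀ ψ) ∧
    deriv H₀ ψ₀ = 0 ∧ deriv H₀ (-ψ₀) = 0 ∧
    (∀ ψ, ψ ∈ Set.Ioo (-(π / 4)) (-ψ₀) ∪ Set.Ioo ψ₀ (π / 4) → deriv H₀ ψ < 0) ∧
    StrictMonoOn H₀ (Set.Icc (-ψ₀) ψ₀) ∧
    StrictAntiOn H₀ (Set.Ioc (-(π / 4)) (-ψ₀)) ∧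
    StrictAntiOn H₀ (Set.Ico ψ₀ (π / 4)) ∧
    IsLocalMax H₀ ψ₀ ∧ IsLocalMin H₀ (-ψ₀) ∧
    deriv (deriv H₀) ψ₀ ≠ 0 ∧ deriv (deriv H₀) (-ψ₀) ≠ 0 := by
  obtain rfl : H₀ = meanCurvatureCoeff :=
    funext fun ψ => (hH₀ ψ).trans (meanCurvatureCoeff_eq ψ).symm
  have hodd := odd_meanCurvatureCoeff
  have heven := even_deriv_of_odd hodd
  have hcont := continuousOn_meanCurvatureCoeff
  have hanti := strictAntiOn_deriv_meanCurvatureCoeff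
  have hcos := cos_two_mul_pos ⟨by linarith [hψ₀.1, hψ₀.2], hψ₀.2⟩
  have hcrit := deriv_meanCurvatureCoeff_eq_zero hcos.ne' hroot
  have hmid := strictMonoOn_Icc_of_odd_of_strictAntiOn_deriv hodd hcont hanti hψ₀ hcrit
  have hright := strictAntiOn_Ico_of_odd_of_strictAntiOn_deriv hodd hcont hanti hψ₀ hcrit
  have hleft := strictAntiOn_Ioc_neg_of_odd hodd hright
  have hsecond := (deriv_deriv_meanCurvatureCoeff_neg hψ₀).ne
  refine ⟨fun ψ hψ => ?_, hcrit, (heven ψ₀).trans hcrit, fun ψ hψ => ?_, hmid, hleft, hright,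
    isLocalMax_of_mono_anti (neg_lt_self hψ₀.1) hψ₀.2
      (hmid.monotoneOn.mono Set.Ioc_subset_Icc_self) hright.antitoneOn,
    isLocalMin_of_anti_mono (neg_lt_neg hψ₀.2) (neg_lt_self hψ₀.1) hleft.antitoneOn
      (hmid.monotoneOn.mono Set.Ico_subset_Icc_self),
    hsecond, (odd_deriv_of_even heven ψ₀).trans_ne (neg_ne_zero.2 hsecond)⟩
  · have hψ_abs : |ψ| < ψ₀ := abs_lt.2 hψ
    exact (deriv_pos_iff_abs_lt_of_odd hodd hanti hψ₀ hcrit (hψ_abs.trans hψ₀.2)).2 hψ_abs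
  · have hψ_abs : ψ₀ < |ψ| ∧ |ψ| < π / 4 := by grind
    exact (deriv_neg_iff_lt_abs_of_odd hodd hanti hψ₀ hcrit hψ_abs.2).2 hψ_abs.1
end
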